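/- Let η = (η^1, …, η^k) be a smooth ℝ^k-valued differential one-form on an open set U ⊆ ℝ^m with Reeb vector fields R_1, …, R_k satisfying [R_β, R_γ] = 0 for all β, γ, and let X be an η-Hamiltonian vector field with η-Hamiltonian k-function h = (h^1, …, h^k). Then for each β ∈ {1,…,k}, the Lie bracket [R_β, X] is again an η-Hamiltonian vector field, whose η-Hamiltonian k-function is R_βh = (R_βh^1, …, R_βh^k); that is, ι_{[R_β,X]}η^α = −R_βh^α and ι_{[R_β,X]}dη^α = d(R_βh^α) − Σ_{γ=1}^k (R_γ(R_βh^α))·η^γ for all α. -/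

import Mathlib

/-- Lie bracket of vector fields: `[X, Y](x) = DY(x)(X(x)) − DX(x)(Y(x))`. -/
noncomputable def lieBr {E : Type*} [NormedAddCommGroup E] [NormedSpace ℝ E]
    (X Y : E → E) : E → E :=
  fun x => fderiv ℝ Y x (X x) - fderiv ℝ X x (Y x)

/-- Exterior derivative of a one-form: `dθ_x(u, v) = Dθ(x)(u)(v) − Dθ(x)(v)(u)`. -/
noncomputable def extD {E : Type*} [NormedAddCommGroup E] [NormedSpace ℝ E]
    (θ : E → (E →L[ℝ] ℝ)) (x u v : E) : ℝ :=
  fderiv ℝ θ x u v - fderiv ℝ θ x v u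

/-!
Let `L` denote the Lie derivative. The Reeb conditions give `L_{R_β} η^α = 0`, so `L_{R_β}` commutes
with contraction up to brackets: `ι_{[R_β, X]} η^α = R_β(ι_X η^α)` and
`ι_{[R_β, X]} dη^α = L_{R_β}(ι_X dη^α)`. Applying `L_{R_β}` to the two Hamiltonian equations of `X`
therefore gives those of `[R_β, X]`, except that `R_β(R_γ h^α)` appears in place of `R_γ(R_β h^α)`.
The two agree because the same identities with `X = R_γ` show that every `η^δ` and `dη^δ`
annihilates `[R_β, R_γ]`, so that the second Hamiltonian equation evaluated at `[R_β, R_γ]` reads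
`[R_β, R_γ] h^α = 0`.
-/

open scoped Topology

section LieDerivative

variable {E : Type*} [NormedAddCommGroup E] [NormedSpace ℝ E]

/-- The Lie derivative `L_Y θ` of a one-form along a vector field, in the coordinate form
`(L_Y θ)_x(v) = Dθ(x)(Y(x))(v) + θ_x(DY(x)(v))`. -/
noncomputable def lieDeriv (Y : E → E) (θ : E → (E →L[ℝ] ℝ)) : E → (E →L[ℝ] ℝ) :=
  fun x => fderiv ℝ θ x (Y x) + (θ x).comp (fderiv ℝ Y x)

/-- The one-form `ι_X dθ`, bundled as a field of continuous linear functionals so that it can be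
differentiated. -/
noncomputable def contractExtD (X : E → E) (θ : E → (E →L[ℝ] ℝ)) : E → (E →L[ℝ] ℝ) :=
  fun x => fderiv ℝ θ x (X x) - (ContinuousLinearMap.apply ℝ ℝ (X x)).comp (fderiv ℝ θ x)

variable {X Y : E → E} {θ θ' : E → (E →L[ℝ] ℝ)} {f : E → ℝ} {x : E}

theorem lieDeriv_apply (Y : E → E) (θ : E → (E →L[ℝ] ℝ)) (x v : E) :
    lieDeriv Y θ x v = fderiv ℝ θ x (Y x) v + θ x (fderiv ℝ Y x v) :=
  rfl

theorem contractExtD_apply (X : E → E) (θ : E → (E →L[ℝ] ℝ)) (x v : E) :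
    contractExtD X θ x v = extD θ x (X x) v :=
  rfl

theorem extD_swap (θ : E → (E →L[ℝ] ℝ)) (x u v : E) : extD θ x u v = -extD θ x v u :=
  (neg_sub _ _).symm

theorem differentiableAt_fderiv_of_contDiffAt_two {F : Type*} [NormedAddCommGroup F]
    [NormedSpace ℝ F] {g : E → F} (hg : ContDiffAt ℝ 2 g x) :
    DifferentiableAt ℝ (fderiv ℝ g) x :=
  (hg.fderiv_right (m := 1) (by norm_num)).differentiableAt one_ne_zero

theorem fderiv_fderiv_comm_of_contDiffAt_two {F : Type*} [NormedAddCommGroup F]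
    [NormedSpace ℝ F] {g : E → F} (hg : ContDiffAt ℝ 2 g x) (u v : E) :
    fderiv ℝ (fderiv ℝ g) x u v = fderiv ℝ (fderiv ℝ g) x v u :=
  hg.isSymmSndFDerivAt (by simp) u v

theorem fderiv_pairing_apply {F G : Type*} [NormedAddCommGroup F] [NormedSpace ℝ F]
    [NormedAddCommGroup G] [NormedSpace ℝ G] {A : E → (F →L[ℝ] G)} {u : E → F}
    (hA : DifferentiableAt ℝ A x) (hu : DifferentiableAt ℝ u x) (v : E) :
    fderiv ℝ (fun y => A y (u y)) x v = fderiv ℝ A x v (u x) + A x (fderiv ℝ u x v) := by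
  rw [fderiv_clm_apply hA hu]
  exact add_comm _ _

theorem lieDeriv_eq_contractExtD_add_fderiv (hθ : DifferentiableAt ℝ θ x)
    (hY : DifferentiableAt ℝ Y x) :
    lieDeriv Y θ x = contractExtD Y θ x + fderiv ℝ (fun y => θ y (Y y)) x := by
  ext v
  rw [add_apply, contractExtD_apply, fderiv_pairing_apply hθ hY, lieDeriv_apply, extD]
  ring

theorem fderiv_pairing_eq_lieDeriv_add_lieBr (hθ : DifferentiableAt ℝ θ x)
    (hX : DifferentiableAt ℝ X x) :
    fderiv ℝ (fun y => θ y (X y)) x (Y x) = lieDeriv Y θ x (X x) + θ x (lieBr Y X x) := by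
  rw [fderiv_pairing_apply hθ hX, lieDeriv_apply, lieBr, map_sub]
  ring

theorem lieDeriv_congr (h : θ =ᶠ[𝓝 x] θ') : lieDeriv Y θ x = lieDeriv Y θ' x := by
  rw [lieDeriv, lieDeriv, h.fderiv_eq, h.eq_of_nhds]

theorem lieDeriv_fun_zero (Y : E → E) (x : E) : lieDeriv Y (fun _ => 0) x = 0 := by
  simp [lieDeriv]

theorem lieDeriv_fun_sub (hθ : DifferentiableAt ℝ θ x) (hθ' : DifferentiableAt ℝ θ' x) :
    lieDeriv Y (fun y => θ y - θ' y) x = lieDeriv Y θ x - lieDeriv Y θ' x := by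
  ext v
  simp only [lieDeriv_apply, fderiv_fun_sub hθ hθ', sub_apply]
  ring

theorem lieDeriv_fun_sum {ι : Type*} {s : Finset ι} {ω : ι → E → (E →L[ℝ] ℝ)}
    (hω : ∀ i ∈ s, DifferentiableAt ℝ (ω i) x) :
    lieDeriv Y (fun y => ∑ i ∈ s, ω i y) x = ∑ i ∈ s, lieDeriv Y (ω i) x := by
  ext v
  simp only [lieDeriv_apply, fderiv_fun_sum hω, sum_apply, Finset.sum_add_distrib]

theorem lieDeriv_fun_smul (hf : DifferentiableAt ℝ f x) (hθ : DifferentiableAt ℝ θ x) :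
    lieDeriv Y (fun y => f y • θ y) x = fderiv ℝ f x (Y x) • θ x + f x • lieDeriv Y θ x := by
  ext v
  simp only [lieDeriv_apply, fderiv_fun_smul hf hθ, add_apply, smul_apply,
    ContinuousLinearMap.smulRight_apply, smul_eq_mul]
  ring

theorem lieDeriv_fderiv (hf : ContDiffAt ℝ 2 f x) (hY : DifferentiableAt ℝ Y x) :
    lieDeriv Y (fderiv ℝ f) x = fderiv ℝ (fun y => fderiv ℝ f y (Y y)) x := by
  ext v
  rw [fderiv_pairing_apply (differentiableAt_fderiv_of_contDiffAt_two hf) hY, lieDeriv_apply,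
    fderiv_fderiv_comm_of_contDiffAt_two hf]

theorem differentiableAt_contractExtD (hθ : DifferentiableAt ℝ (fderiv ℝ θ) x)
    (hX : DifferentiableAt ℝ X x) : DifferentiableAt ℝ (contractExtD X θ) x :=
  (hθ.clm_apply hX).fun_sub
    (((ContinuousLinearMap.apply ℝ ℝ).differentiableAt.comp x hX).clm_comp hθ)

theorem fderiv_contractExtD_apply (hθ : DifferentiableAt ℝ (fderiv ℝ θ) x)
    (hX : DifferentiableAt ℝ X x) (u v : E) :
    fderiv ℝ (contractExtD X θ) x u v =
      fderiv ℝ (fderiv ℝ θ) x u (X x) v - fderiv ℝ (fderiv ℝ θ) x u v (X x) +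
        extD θ x (fderiv ℝ X x u) v := by
  have hv : DifferentiableAt ℝ (fun _ : E => v) x := differentiableAt_const v
  have hθX : DifferentiableAt ℝ (fun y => fderiv ℝ θ y (X y)) x := hθ.clm_apply hX
  have hθv : DifferentiableAt ℝ (fun y => fderiv ℝ θ y v) x := hθ.clm_apply hv
  calc fderiv ℝ (contractExtD X θ) x u v
    _ = fderiv ℝ (fun y => extD θ y (X y) v) x u := by
      simp only [← contractExtD_apply]
      simpa using (fderiv_pairing_apply (differentiableAt_contractExtD hθ hX) hv u).symm
    _ = _ := by
      simp only [extD]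
      rw [fderiv_fun_sub (hθX.clm_apply hv) (hθv.clm_apply hX), sub_apply,
        fderiv_pairing_apply hθX hv, fderiv_pairing_apply hθ hX, fderiv_pairing_apply hθv hX,
        fderiv_pairing_apply hθ hv]
      simp only [fderiv_fun_const, Pi.zero_apply, zero_apply, map_zero, add_apply]
      ring

/-- The last term is `ι_X (L_Y dθ)`, since `L_Y dθ = d(ι_Y dθ)` by closedness of `dθ`. -/
theorem lieDeriv_contractExtD (hθ : ContDiffAt ℝ 2 θ x) (hX : DifferentiableAt ℝ X x)
    (hY : DifferentiableAt ℝ Y x) :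
    lieDeriv Y (contractExtD X θ) x =
      contractExtD (lieBr Y X) θ x + contractExtD X (contractExtD Y θ) x := by
  have hθ' := differentiableAt_fderiv_of_contDiffAt_two hθ
  have symm := fderiv_fderiv_comm_of_contDiffAt_two hθ
  ext v
  simp only [add_apply, lieDeriv_apply, contractExtD_apply, lieBr, extD, map_sub, sub_apply,
    fderiv_contractExtD_apply hθ' hX, fderiv_contractExtD_apply hθ' hY]
  rw [symm (Y x) (X x), symm (Y x) v, symm (X x) v]
  ring

end LieDerivative

section Reeb

variable {E ι : Type*} [NormedAddCommGroup E] [NormedSpace ℝ E] [DecidableEq ι]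

/-- `R` is a family of Reeb vector fields on `U` for the vector-valued one-form with components
`η α`: `ι_{R_α} η^β = δ_α^β` and `ι_{R_α} dη^β = 0`. -/
def IsReebOn (η : ι → E → (E →L[ℝ] ℝ)) (R : ι → E → E) (U : Set E) : Prop :=
  ∀ x ∈ U, ∀ α β : ι,
    η β x (R α x) = (if α = β then (1 : ℝ) else 0) ∧ ∀ v, extD (η β) x (R α x) v = 0

namespace IsReebOn

variable {η : ι → E → (E →L[ℝ] ℝ)} {R : ι → E → E} {U : Set E} {Y : E → E} {x : E}

theorem contractExtD_eq_zero (hR : IsReebOn η R U) (hx : x ∈ U) (α β : ι) :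
    contractExtD (R α) (η β) x = 0 :=
  ContinuousLinearMap.ext (hR x hx α β).2

theorem fderiv_pairing_eq_zero (hR : IsReebOn η R U) (hU : U ∈ 𝓝 x) (α β : ι) :
    fderiv ℝ (fun y => η β y (R α y)) x = 0 := by
  have pairing_const : (fun y => η β y (R α y)) =ᶠ[𝓝 x] fun _ => if α = β then (1 : ℝ) else 0 := by
    filter_upwards [hU] with y hy using (hR y hy α β).1
  rw [pairing_const.fderiv_eq, fderiv_fun_const, Pi.zero_apply]

theorem lieDeriv_eq_zero (hR : IsReebOn η R U) (hU : U ∈ 𝓝 x) {α β : ι}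
    (hη : DifferentiableAt ℝ (η β) x) (hRα : DifferentiableAt ℝ (R α) x) :
    lieDeriv (R α) (η β) x = 0 := by
  rw [lieDeriv_eq_contractExtD_add_fderiv hη hRα, hR.contractExtD_eq_zero (mem_of_mem_nhds hU),
    hR.fderiv_pairing_eq_zero hU, add_zero]

theorem apply_lieBr (hR : IsReebOn η R U) (hU : U ∈ 𝓝 x) {α β : ι}
    (hη : DifferentiableAt ℝ (η β) x) (hRα : DifferentiableAt ℝ (R α) x)
    (hY : DifferentiableAt ℝ Y x) :
    η β x (lieBr (R α) Y x) = fderiv ℝ (fun y => η β y (Y y)) x (R α x) := by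
  rw [fderiv_pairing_eq_lieDeriv_add_lieBr hη hY, hR.lieDeriv_eq_zero hU hη hRα,
    zero_apply, zero_add]

theorem contractExtD_lieBr (hR : IsReebOn η R U) (hU : U ∈ 𝓝 x) {α β : ι}
    (hη : ContDiffAt ℝ 2 (η β) x) (hRα : DifferentiableAt ℝ (R α) x)
    (hY : DifferentiableAt ℝ Y x) :
    contractExtD (lieBr (R α) Y) (η β) x = lieDeriv (R α) (contractExtD Y (η β)) x := by
  have contract_zero : contractExtD (R α) (η β) =ᶠ[𝓝 x] fun _ => 0 := by
    filter_upwards [hU] with y hy using hR.contractExtD_eq_zero hy α β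
  have fderiv_zero : fderiv ℝ (contractExtD (R α) (η β)) x = 0 := by
    rw [contract_zero.fderiv_eq, fderiv_fun_const, Pi.zero_apply]
  rw [lieDeriv_contractExtD hη hY hRα, left_eq_add, contractExtD, fderiv_zero]
  simp

theorem apply_lieBr_eq_zero (hR : IsReebOn η R U) (hU : U ∈ 𝓝 x) {α β γ : ι}
    (hη : DifferentiableAt ℝ (η β) x) (hRα : DifferentiableAt ℝ (R α) x)
    (hRγ : DifferentiableAt ℝ (R γ) x) :
    η β x (lieBr (R α) (R γ) x) = 0 := by
  rw [hR.apply_lieBr hU hη hRα hRγ, hR.fderiv_pairing_eq_zero hU, zero_apply]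

theorem contractExtD_lieBr_eq_zero (hR : IsReebOn η R U) (hU : U ∈ 𝓝 x) {α β γ : ι}
    (hη : ContDiffAt ℝ 2 (η β) x) (hRα : DifferentiableAt ℝ (R α) x)
    (hRγ : DifferentiableAt ℝ (R γ) x) :
    contractExtD (lieBr (R α) (R γ)) (η β) x = 0 := by
  have contract_zero : contractExtD (R γ) (η β) =ᶠ[𝓝 x] fun _ => 0 := by
    filter_upwards [hU] with y hy using hR.contractExtD_eq_zero hy γ β
  rw [hR.contractExtD_lieBr hU hη hRα hRγ, lieDeriv_congr contract_zero, lieDeriv_fun_zero]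

end IsReebOn

end Reeb

section Hamiltonian

variable {E ι : Type*} [NormedAddCommGroup E] [NormedSpace ℝ E] [Fintype ι]

/-- `X` is an `η`-Hamiltonian vector field on `U` with `η`-Hamiltonian function `h`, relative to the
Reeb vector fields `R`: `ι_X η^α = -h^α` and `ι_X dη^α = dh^α - ∑ β, (R_β h^α) η^β`. -/
def IsHamiltonianOn (η : ι → E → (E →L[ℝ] ℝ)) (R : ι → E → E) (X : E → E) (h : ι → E → ℝ)
    (U : Set E) : Prop :=
  ∀ x ∈ U, ∀ α : ι,
    η α x (X x) = -(h α x) ∧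
    ∀ v, extD (η α) x (X x) v = fderiv ℝ (h α) x v - ∑ β, fderiv ℝ (h α) x (R β x) * η β x v

variable {η : ι → E → (E →L[ℝ] ℝ)} {R : ι → E → E} {U : Set E} {X Y : E → E} {h : ι → E → ℝ}
  {f : E → ℝ} {x : E}

theorem lieDeriv_fderiv_sub_sum_smul (hf : ContDiffAt ℝ 2 f x) (hY : DifferentiableAt ℝ Y x)
    (hh : ∀ γ, DifferentiableAt ℝ (h γ) x) (hη : ∀ γ, DifferentiableAt ℝ (η γ) x)
    (hYη : ∀ γ, lieDeriv Y (η γ) x = 0) :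
    lieDeriv Y (fun y => fderiv ℝ f y - ∑ γ, h γ y • η γ y) x =
      fderiv ℝ (fun y => fderiv ℝ f y (Y y)) x - ∑ γ, fderiv ℝ (h γ) x (Y x) • η γ x := by
  have hhη : ∀ γ ∈ Finset.univ, DifferentiableAt ℝ (fun y => h γ y • η γ y) x :=
    fun γ _ => (hh γ).fun_smul (hη γ)
  rw [lieDeriv_fun_sub (differentiableAt_fderiv_of_contDiffAt_two hf)
    (DifferentiableAt.fun_sum hhη), lieDeriv_fderiv hf hY, lieDeriv_fun_sum hhη]
  simp only [lieDeriv_fun_smul (hh _) (hη _), hYη, smul_zero, add_zero]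

namespace IsHamiltonianOn

theorem contractExtD_eq (hX : IsHamiltonianOn η R X h U) (hx : x ∈ U) (α : ι) :
    contractExtD X (η α) x = fderiv ℝ (h α) x - ∑ γ, fderiv ℝ (h α) x (R γ x) • η γ x := by
  ext v
  simpa [contractExtD_apply] using (hX x hx α).2 v

theorem fderiv_lieBr_reeb_eq_zero [DecidableEq ι] (hX : IsHamiltonianOn η R X h U)
    (hR : IsReebOn η R U) (hU : U ∈ 𝓝 x) (hη : ∀ α, ContDiffAt ℝ 2 (η α) x)
    (hRd : ∀ α, DifferentiableAt ℝ (R α) x) (α β γ : ι) :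
    fderiv ℝ (h α) x (lieBr (R β) (R γ) x) = 0 := by
  have η_bracket (δ : ι) : η δ x (lieBr (R β) (R γ) x) = 0 :=
    hR.apply_lieBr_eq_zero hU ((hη δ).differentiableAt two_ne_zero) (hRd β) (hRd γ)
  have dη_bracket : extD (η α) x (X x) (lieBr (R β) (R γ) x) = 0 := by
    rw [extD_swap, ← contractExtD_apply, hR.contractExtD_lieBr_eq_zero hU (hη α) (hRd β) (hRd γ),
      zero_apply, neg_zero]
  simpa [η_bracket, dη_bracket] using
    ((hX x (mem_of_mem_nhds hU) α).2 (lieBr (R β) (R γ) x)).symm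

theorem fderiv_reeb_comm [DecidableEq ι] (hX : IsHamiltonianOn η R X h U)
    (hR : IsReebOn η R U) (hU : U ∈ 𝓝 x) (hη : ∀ α, ContDiffAt ℝ 2 (η α) x)
    (hRd : ∀ α, DifferentiableAt ℝ (R α) x) {α : ι} (hh : ContDiffAt ℝ 2 (h α) x) (β γ : ι) :
    fderiv ℝ (fun y => fderiv ℝ (h α) y (R γ y)) x (R β x) =
      fderiv ℝ (fun y => fderiv ℝ (h α) y (R β y)) x (R γ x) := by
  rw [← sub_eq_zero, ← VectorField.fderiv_apply_lieBracket hh (by simp) (hRd γ) (hRd β)]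
  exact hX.fderiv_lieBr_reeb_eq_zero hR hU hη hRd α β γ

theorem contractExtD_lieBr_reeb [DecidableEq ι] (hX : IsHamiltonianOn η R X h U)
    (hR : IsReebOn η R U) (hU : U ∈ 𝓝 x) (hη : ∀ α, ContDiffAt ℝ 2 (η α) x)
    (hRd : ∀ α, DifferentiableAt ℝ (R α) x) (hXd : DifferentiableAt ℝ X x) {α : ι}
    (hh : ContDiffAt ℝ 2 (h α) x) (β : ι) :
    contractExtD (lieBr (R β) X) (η α) x =
      fderiv ℝ (fun y => fderiv ℝ (h α) y (R β y)) x -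
        ∑ γ, fderiv ℝ (fun y => fderiv ℝ (h α) y (R β y)) x (R γ x) • η γ x := by
  have hηd (γ : ι) : DifferentiableAt ℝ (η γ) x := (hη γ).differentiableAt two_ne_zero
  have hamilton_eq : contractExtD X (η α) =ᶠ[𝓝 x]
      fun y => fderiv ℝ (h α) y - ∑ γ, fderiv ℝ (h α) y (R γ y) • η γ y := by
    filter_upwards [hU] with y hy using hX.contractExtD_eq hy α
  rw [hR.contractExtD_lieBr hU (hη α) (hRd β) hXd, lieDeriv_congr hamilton_eq,
    lieDeriv_fderiv_sub_sum_smul hh (hRd β)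
      (fun γ => (differentiableAt_fderiv_of_contDiffAt_two hh).clm_apply (hRd γ)) hηd
      (fun γ => hR.lieDeriv_eq_zero hU (hηd γ) (hRd β))]
  simp only [hX.fderiv_reeb_comm hR hU hη hRd hh β]

theorem apply_lieBr_reeb [DecidableEq ι] (hX : IsHamiltonianOn η R X h U)
    (hR : IsReebOn η R U) (hU : U ∈ 𝓝 x) {α β : ι} (hη : DifferentiableAt ℝ (η α) x)
    (hRβ : DifferentiableAt ℝ (R β) x) (hXd : DifferentiableAt ℝ X x) :
    η α x (lieBr (R β) X x) = -(fderiv ℝ (h α) x (R β x)) := by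
  have hamilton_eq : (fun y => η α y (X y)) =ᶠ[𝓝 x] fun y => -(h α y) := by
    filter_upwards [hU] with y hy using (hX y hy α).1
  rw [hR.apply_lieBr hU hη hRβ hXd, hamilton_eq.fderiv_eq, fderiv_fun_neg,
    neg_apply]

end IsHamiltonianOn

end Hamiltonian

theorem stmt_6_general {E ι : Type*} [NormedAddCommGroup E] [NormedSpace ℝ E] [Fintype ι]
    [DecidableEq ι] {U : Set E} (hU : IsOpen U)
    {η : ι → E → (E →L[ℝ] ℝ)} (hη : ∀ α, ContDiffOn ℝ 2 (η α) U)
    {R : ι → E → E} (hRd : ∀ α, DifferentiableOn ℝ (R α) U) (hR : IsReebOn η R U)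
    {X : E → E} (hXd : DifferentiableOn ℝ X U)
    {h : ι → E → ℝ} (hh : ∀ α, ContDiffOn ℝ 2 (h α) U) (hX : IsHamiltonianOn η R X h U) (β : ι) :
    IsHamiltonianOn η R (lieBr (R β) X) (fun α y => fderiv ℝ (h α) y (R β y)) U := by
  intro x hx α
  have hUx : U ∈ 𝓝 x := hU.mem_nhds hx
  have hηx (γ : ι) : ContDiffAt ℝ 2 (η γ) x := (hη γ).contDiffAt hUx
  have hRx (γ : ι) : DifferentiableAt ℝ (R γ) x := (hRd γ).differentiableAt hUx
  have hXx : DifferentiableAt ℝ X x := hXd.differentiableAt hUx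
  refine ⟨hX.apply_lieBr_reeb hR hUx ((hηx α).differentiableAt two_ne_zero) (hRx β) hXx,
    fun v => ?_⟩
  rw [← contractExtD_apply,
    hX.contractExtD_lieBr_reeb hR hUx hηx hRx hXx ((hh α).contDiffAt hUx) β]
  simp

/-- **`[R_β, X_h] = X_{R_βh}`.** If `X` is an `η`-Hamiltonian vector field with
`η`-Hamiltonian k-function `h` relative to a smooth `ℝ^k`-valued one-form `η` on an
open `U ⊆ ℝ^m` with commuting Reeb vector fields `R_1, …, R_k`, then each
`[R_β, X]` is again `η`-Hamiltonian, with `η`-Hamiltonian k-function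
`R_βh = (R_βh^1, …, R_βh^k)`. -/
theorem stmt_6 (m k : ℕ) (U : Set (Fin m → ℝ)) (hU : IsOpen U)
    (η : Fin k → (Fin m → ℝ) → ((Fin m → ℝ) →L[ℝ] ℝ))
    (hη : ∀ α, ContDiffOn ℝ (⊤ : ℕ∞) (η α) U)
    (R : Fin k → (Fin m → ℝ) → (Fin m → ℝ))
    (hRs : ∀ α, ContDiffOn ℝ (⊤ : ℕ∞) (R α) U)
    (hReeb : ∀ x ∈ U, ∀ α β : Fin k,
      η β x (R α x) = (if α = β then (1 : ℝ) else 0) ∧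
      ∀ v, extD (η β) x (R α x) v = 0)
    (hRcomm : ∀ x ∈ U, ∀ β γ : Fin k, lieBr (R β) (R γ) x = 0)
    (X : (Fin m → ℝ) → (Fin m → ℝ)) (hX : ContDiffOn ℝ (⊤ : ℕ∞) X U)
    (h : Fin k → (Fin m → ℝ) → ℝ)
    (hhs : ∀ α, ContDiffOn ℝ (⊤ : ℕ∞) (h α) U)
    (hHam : ∀ x ∈ U, ∀ α : Fin k,
      η α x (X x) = -(h α x) ∧
      ∀ v, extD (η α) x (X x) v =
        fderiv ℝ (h α) x v - ∑ β, fderiv ℝ (h α) x (R β x) * η β x v) :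
    ∀ β : Fin k, ∀ x ∈ U, ∀ α : Fin k,
      η α x (lieBr (R β) X x) = -(fderiv ℝ (h α) x (R β x)) ∧
      ∀ v, extD (η α) x (lieBr (R β) X x) v =
        fderiv ℝ (fun y => fderiv ℝ (h α) y (R β y)) x v -
          ∑ γ, fderiv ℝ (fun y => fderiv ℝ (h α) y (R β y)) x (R γ x) * η γ x v := by
  have two_le : (2 : WithTop ℕ∞) ≤ (⊤ : ℕ∞) := WithTop.coe_le_coe.2 le_top
  exact stmt_6_general hU (fun α => (hη α).of_le two_le)
    (fun α => (hRs α).differentiableOn (by simp)) hReeb (hX.differentiableOn (by simp))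
    (fun α => (hhs α).of_le two_le) hHam
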